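/- arXiv:math-ph/0112059 — 7 statements merged into one kernel-verified Lean document; each statement's English description precedes it below -/
import Mathlib

section
/- Suppose the continuous linear functional l₀ ∈ B* satisfies l₀(ρ(h)v) = χ(h)·l₀(v) for all h ∈ H and v ∈ B. Then the reduced wavelet transform intertwines ρ with the induced representation λ: for every g ∈ G and every v ∈ B, W(ρ(g)v) = λ(g)(Wv) as functions on X. -/
open MeasureTheory

/-- If the analysing functional `l₀` satisfies
`l₀(ρ(h)v) = χ(h)·l₀(v)` for all `h ∈ H`, then the reduced wavelet transform
`(Wv)(x) = l₀(ρ(s(x))⁻¹ v)` intertwines `ρ` with the induced representation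
`[λ(g)f](x) = χ(r(g⁻¹·s(x)))⁻¹ · f(p(g⁻¹·s(x)))`. -/
theorem reduced_wavelet_transform_intertwines
    {G : Type*} [Group G] (H : Subgroup G) {X : Type*}
    (s : X → G) (p : G → X) (r : G → H)
    (hdecomp : ∀ g : G, g = s (p g) * (r g : G))
    (huniq : ∀ (g : G) (x : X) (h : H), g = s x * (h : G) → x = p g ∧ h = r g)
    {B : Type*} [NormedAddCommGroup B] [NormedSpace ℂ B]
    (ρ : G →* (B ≃L[ℂ] B)) (χ : H → ℂ) (hχ : ∀ h : H, χ h ≠ 0)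
    (l₀ : B →L[ℂ] ℂ)
    (hl₀ : ∀ (h : H) (v : B), l₀ (ρ (h : G) v) = χ h * l₀ v) :
    ∀ (g : G) (v : B) (x : X),
      l₀ ((ρ (s x))⁻¹ (ρ g v)) =
        (χ (r (g⁻¹ * s x)))⁻¹ * l₀ ((ρ (s (p (g⁻¹ * s x))))⁻¹ v) := by
  intro g v x
  have hfactor : (r (g⁻¹ * s x) : G) * ((s x)⁻¹ * g) = (s (p (g⁻¹ * s x)))⁻¹ := by
    rw [eq_inv_iff_mul_eq_one, mul_eq_one_iff_eq_inv, ← inv_inj, inv_inv, mul_inv_rev,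
      mul_inv_rev, inv_inv, ← mul_inv_eq_iff_eq_mul.mpr (hdecomp (g⁻¹ * s x))]
  rw [eq_inv_mul_iff_mul_eq₀ (hχ _), ← hl₀, ← map_inv, ← map_inv, ← hfactor, map_mul, map_mul]
  rfl
end

section
/- Suppose ρ(h)b₀ = χ(h)·b₀ for all h ∈ H, and that for every g ∈ G the map x ↦ p(g⁻¹·s(x)) is a measurable bijection of X onto itself preserving the measure μ. Then for every g ∈ G and every function f : X → ℂ such that both x ↦ f(x)·ρ(s(x))b₀ and x ↦ [λ(g)f](x)·ρ(s(x))b₀ are Bochner integrable, the inverse wavelet transform intertwines λ with ρ: M(λ(g)f) = ρ(g)(Mf). -/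
open MeasureTheory

/-- If the vacuum vector `b₀` satisfies `ρ(h)b₀ = χ(h)·b₀` for
all `h ∈ H`, and for each `g ∈ G` the map `x ↦ p(g⁻¹·s(x))` is a measurable
bijection of `X` preserving `μ`, then the inverse wavelet transform
`Mf = ∫_X f(x)·ρ(s(x))b₀ dμ(x)` intertwines the induced representation
`[λ(g)f](x) = χ(r(g⁻¹·s(x)))⁻¹ · f(p(g⁻¹·s(x)))` with `ρ`:
`M(λ(g)f) = ρ(g)(Mf)` whenever both Bochner integrals exist. -/
theorem inverse_wavelet_transform_intertwines
    {G : Type*} [Group G] (H : Subgroup G)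
    {X : Type*} [MeasurableSpace X] (μ : Measure X)
    (s : X → G) (p : G → X) (r : G → H)
    (hdecomp : ∀ g : G, g = s (p g) * (r g : G))
    (huniq : ∀ (g : G) (x : X) (h : H), g = s x * (h : G) → x = p g ∧ h = r g)
    {B : Type*} [NormedAddCommGroup B] [NormedSpace ℂ B] [CompleteSpace B]
    (ρ : G →* (B ≃L[ℂ] B)) (χ : H → ℂ) (hχ : ∀ h : H, χ h ≠ 0)
    (b₀ : B)
    (hb₀ : ∀ h : H, ρ (h : G) b₀ = χ h • b₀)
    (hmp : ∀ g : G,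
      MeasurePreserving (fun x : X => p (g⁻¹ * s x)) μ μ ∧
      Function.Bijective (fun x : X => p (g⁻¹ * s x))) :
    ∀ (g : G) (f : X → ℂ),
      Integrable (fun x : X => f x • ρ (s x) b₀) μ →
      Integrable (fun x : X =>
        ((χ (r (g⁻¹ * s x)))⁻¹ * f (p (g⁻¹ * s x))) • ρ (s x) b₀) μ →
      (∫ x : X, ((χ (r (g⁻¹ * s x)))⁻¹ * f (p (g⁻¹ * s x))) • ρ (s x) b₀ ∂μ)
        = ρ g (∫ x : X, f x • ρ (s x) b₀ ∂μ) := by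
  intro g f hf _
  have hpt : ∀ x : X, ((χ (r (g⁻¹ * s x)))⁻¹ * f (p (g⁻¹ * s x))) • ρ (s x) b₀
      = ρ g (f (p (g⁻¹ * s x)) • ρ (s (p (g⁻¹ * s x))) b₀) := by
    intro x
    have hs : s x = g * (s (p (g⁻¹ * s x)) * (r (g⁻¹ * s x) : G)) := by
      rw [← hdecomp, mul_inv_cancel_left]
    have hρ : ρ (s x) b₀
        = χ (r (g⁻¹ * s x)) • ρ g (ρ (s (p (g⁻¹ * s x))) b₀) := by
      calc ρ (s x) b₀
          = ρ (g * (s (p (g⁻¹ * s x)) * (r (g⁻¹ * s x) : G))) b₀ := by rw [← hs]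
        _ = ρ g (ρ (s (p (g⁻¹ * s x))) (ρ (r (g⁻¹ * s x) : G) b₀)) := by
          rw [map_mul, map_mul]; rfl
        _ = _ := by rw [hb₀, map_smul, map_smul]
    rw [hρ, map_smul, smul_smul, mul_right_comm, inv_mul_cancel₀ (hχ _), one_mul]
  have hT := (hmp g).1
  simp_rw [hpt]
  rw [ContinuousLinearEquiv.integral_comp_comm]
  congr 1
  have hmeas : AEStronglyMeasurable (fun x : X => f x • ρ (s x) b₀)
      (μ.map fun x : X => p (g⁻¹ * s x)) := by
    rw [hT.map_eq]; exact hf.aestronglyMeasurable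
  rw [← integral_map hT.aemeasurable hmeas, hT.map_eq]
end

section
/- Suppose l₀(ρ(h)v) = χ(h)·l₀(v) and ρ(h)b₀ = χ(h)·b₀ for all h ∈ H, v ∈ B; that for every g ∈ G the map x ↦ p(g⁻¹·s(x)) is a measurable bijection of X preserving μ; that for every v ∈ B the map x ↦ l₀(ρ(s(x))⁻¹v)·ρ(s(x))b₀ is Bochner integrable, so that Pv := M(Wv) is defined for all v ∈ B; and the reproducing property l₀(Pv) = l₀(v) for all v ∈ B. Then P commutes with the representation, P(ρ(g)v) = ρ(g)(Pv) for all g ∈ G and v ∈ B, and P is idempotent: P(Pv) = Pv for all v ∈ B. -/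
open MeasureTheory

/-- Under the eigenvector conditions on `l₀` and `b₀`, measure
invariance of the geometric action, integrability making `Pv := M(Wv)` defined,
and the reproducing property `l₀(Pv) = l₀(v)`, the operator `P` commutes with
the representation `ρ` and is idempotent. -/
theorem wavelet_projection_commutes_and_idempotent
    {G : Type*} [Group G] (H : Subgroup G)
    {X : Type*} [MeasurableSpace X] (μ : Measure X)
    (s : X → G) (p : G → X) (r : G → H)
    (hdecomp : ∀ g : G, g = s (p g) * (r g : G))
    (huniq : ∀ (g : G) (x : X) (h : H), g = s x * (h : G) → x = p g ∧ h = r g)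
    {B : Type*} [NormedAddCommGroup B] [NormedSpace ℂ B] [CompleteSpace B]
    (ρ : G →* (B ≃L[ℂ] B)) (χ : H → ℂ) (hχ : ∀ h : H, χ h ≠ 0)
    (l₀ : B →L[ℂ] ℂ) (b₀ : B)
    (hl₀ : ∀ (h : H) (v : B), l₀ (ρ (h : G) v) = χ h * l₀ v)
    (hb₀ : ∀ h : H, ρ (h : G) b₀ = χ h • b₀)
    (hmp : ∀ g : G,
      MeasurePreserving (fun x : X => p (g⁻¹ * s x)) μ μ ∧
      Function.Bijective (fun x : X => p (g⁻¹ * s x)))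
    (P : B → B)
    (hP : ∀ v : B, P v = ∫ x : X, (l₀ ((ρ (s x))⁻¹ v)) • ρ (s x) b₀ ∂μ)
    (hint : ∀ v : B,
      Integrable (fun x : X => (l₀ ((ρ (s x))⁻¹ v)) • ρ (s x) b₀) μ)
    (hrepr : ∀ v : B, l₀ (P v) = l₀ v) :
    (∀ (g : G) (v : B), P (ρ g v) = ρ g (P v)) ∧ (∀ v : B, P (P v) = P v) := by
  have hmul : ∀ (a b : G) (v : B), ρ (a * b) v = ρ a (ρ b v) := by
    intro a b v
    rw [map_mul]
    rfl
  have hinv : ∀ (v : B) (k : G) (h : H),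
      l₀ ((ρ (k * h))⁻¹ v) • ρ (k * h) b₀ = l₀ ((ρ k)⁻¹ v) • ρ k b₀ := by
    intro v k h
    have hl : l₀ ((ρ k)⁻¹ v) = χ h * l₀ ((ρ (k * h))⁻¹ v) := by
      rw [← hl₀, ← map_inv, ← map_inv, ← hmul]
      simp
    rw [hl, hmul k h, hb₀, map_smul, smul_smul, mul_comm]
  have hcomm : ∀ (g : G) (v : B), P (ρ g v) = ρ g (P v) := by
    intro g v
    obtain ⟨hpres, -⟩ := hmp g
    have hchange : ∫ x, l₀ ((ρ (s (p (g⁻¹ * s x))))⁻¹ v) • ρ (s (p (g⁻¹ * s x))) b₀ ∂μ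
        = P v := by
      have hmeas := (hint v).aestronglyMeasurable
      rw [← hpres.map_eq] at hmeas
      rw [hP, ← integral_map hpres.measurable.aemeasurable hmeas, hpres.map_eq]
    rw [← hchange, hP, ← ContinuousLinearEquiv.integral_comp_comm]
    congr 1 with x
    rw [← hinv v _ (r (g⁻¹ * s x)), ← hdecomp, map_smul, ← hmul g, ← map_inv, ← map_inv,
      ← hmul]
    simp
  refine ⟨hcomm, fun v => ?_⟩
  rw [hP (P v), hP v]
  congr 1 with x
  rw [← hP v, ← map_inv, ← hcomm, hrepr]
end

section
/- In addition to the hypotheses making P := M∘W a well-defined idempotent commuting with ρ (namely: l₀(ρ(h)v) = χ(h)·l₀(v) and ρ(h)b₀ = χ(h)·b₀ for h ∈ H; for every g the map x ↦ p(g⁻¹·s(x)) is a measure-preserving measurable bijection of X; Bochner integrability of x ↦ l₀(ρ(s(x))⁻¹v)·ρ(s(x))b₀ for every v; and l₀(Pv) = l₀(v) for all v), assume that P is a continuous linear operator on B, that l₀(b₀) ≠ 0, and that ρ is topologically irreducible, i.e. the only closed subspaces of B invariant under all ρ(g) are {0} and B. Then P is the identity operator on B; in particular the inverse wavelet transform M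 is a left inverse of the reduced wavelet transform W. -/
open MeasureTheory

/-- A representation by continuous linear automorphisms sends products to composites. -/
theorem representation_mul_apply {G : Type*} [Group G]
    {B : Type*} [NormedAddCommGroup B] [NormedSpace ℂ B]
    (ρ : G →* (B ≃L[ℂ] B)) (a b : G) (v : B) : ρ (a * b) v = ρ a (ρ b v) := by
  rw [map_mul]
  rfl

/-- The integrand `a ↦ l₀(ρ(a)⁻¹v)·ρ(a)b₀` is invariant under right translation by elements
of the subgroup for which `l₀` and `b₀` are covariant. -/
theorem waveletIntegrand_mul_right {G : Type*} [Group G] {H : Subgroup G}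
    {B : Type*} [NormedAddCommGroup B] [NormedSpace ℂ B]
    (ρ : G →* (B ≃L[ℂ] B)) {χ : H → ℂ}
    {l₀ : B →L[ℂ] ℂ} {b₀ : B}
    (hl₀ : ∀ (h : H) (v : B), l₀ (ρ (h : G) v) = χ h * l₀ v)
    (hb₀ : ∀ h : H, ρ (h : G) b₀ = χ h • b₀) (v : B) (a : G) (h : H) :
    l₀ ((ρ (a * h))⁻¹ v) • ρ (a * h) b₀ = l₀ ((ρ a)⁻¹ v) • ρ a b₀ := by
  have hl : l₀ ((ρ a)⁻¹ v) = χ h * l₀ ((ρ (a * h))⁻¹ v) := by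
    rw [← hl₀, ← map_inv, ← map_inv, ← representation_mul_apply, mul_inv_rev,
      mul_inv_cancel_left]
  rw [hl, representation_mul_apply ρ a h b₀, hb₀, map_smul, smul_smul, mul_comm]

/-- If moreover `P = M∘W` is a continuous linear operator,
`l₀(b₀) ≠ 0`, and `ρ` is topologically irreducible (the only closed invariant
subspaces are `{0}` and `B`), then `P` is the identity operator; in particular
the inverse wavelet transform `M` is a left inverse of the reduced wavelet
transform `W`. -/
theorem wavelet_projection_is_identity_of_irreducible
    {G : Type*} [Group G] (H : Subgroup G)
    {X : Type*} [MeasurableSpace X] (μ : Measure X)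
    (s : X → G) (p : G → X) (r : G → H)
    (hdecomp : ∀ g : G, g = s (p g) * (r g : G))
    (huniq : ∀ (g : G) (x : X) (h : H), g = s x * (h : G) → x = p g ∧ h = r g)
    {B : Type*} [NormedAddCommGroup B] [NormedSpace ℂ B] [CompleteSpace B]
    (ρ : G →* (B ≃L[ℂ] B)) (χ : H → ℂ) (hχ : ∀ h : H, χ h ≠ 0)
    (l₀ : B →L[ℂ] ℂ) (b₀ : B)
    (hl₀ : ∀ (h : H) (v : B), l₀ (ρ (h : G) v) = χ h * l₀ v)
    (hb₀ : ∀ h : H, ρ (h : G) b₀ = χ h • b₀)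
    (hmp : ∀ g : G,
      MeasurePreserving (fun x : X => p (g⁻¹ * s x)) μ μ ∧
      Function.Bijective (fun x : X => p (g⁻¹ * s x)))
    (P : B →L[ℂ] B)
    (hP : ∀ v : B, P v = ∫ x : X, (l₀ ((ρ (s x))⁻¹ v)) • ρ (s x) b₀ ∂μ)
    (hint : ∀ v : B,
      Integrable (fun x : X => (l₀ ((ρ (s x))⁻¹ v)) • ρ (s x) b₀) μ)
    (hrepr : ∀ v : B, l₀ (P v) = l₀ v)
    (hvac : l₀ b₀ ≠ 0)
    (hirr : ∀ V : Submodule ℂ B, IsClosed (V : Set B) →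
      (∀ (g : G), ∀ v ∈ V, ρ g v ∈ V) → V = ⊥ ∨ V = ⊤) :
    ∀ v : B, P v = v := by
  have hcomm (g : G) (v : B) : P (ρ g v) = ρ g (P v) := by
    have hpt (x : X) : l₀ ((ρ (s x))⁻¹ (ρ g v)) • ρ (s x) b₀ =
        ρ g (l₀ ((ρ (s (p (g⁻¹ * s x))))⁻¹ v) • ρ (s (p (g⁻¹ * s x))) b₀) := by
      rw [← waveletIntegrand_mul_right ρ hl₀ hb₀ v (s (p (g⁻¹ * s x))) (r (g⁻¹ * s x)),
        ← hdecomp, map_smul, ← representation_mul_apply, mul_inv_cancel_left, ← map_inv,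
        ← map_inv, ← representation_mul_apply, mul_inv_rev, inv_inv]
    have hmeas := (hint v).aestronglyMeasurable
    rw [← (hmp g).1.map_eq] at hmeas
    have hchange := integral_map (hmp g).1.measurable.aemeasurable hmeas
    rw [(hmp g).1.map_eq] at hchange
    rw [hP, hP, hchange]
    simp_rw [hpt]
    exact (ρ g).integral_comp_comm _
  have hidem (v : B) : P (P v) = P v := by
    rw [hP (P v)]
    simp_rw [← map_inv, ← hcomm, hrepr, map_inv]
    exact (hP v).symm
  have hker : P.ker = ⊥ := by
    refine (hirr P.ker P.isClosed_ker fun g v hv => ?_).resolve_right fun htop => ?_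
    · have hv' : P v = 0 := hv
      change P (ρ g v) = 0
      rw [hcomm, hv', map_zero]
    · have hb : P b₀ = 0 := by
        have : b₀ ∈ P.ker := htop ▸ Submodule.mem_top
        exact this
      exact hvac (by rw [← hrepr, hb, map_zero])
  exact fun v => LinearMap.ker_eq_bot.mp hker (hidem v)
end

section
/- For every ℏ > 0 the Schrödinger representation is a unitary representation of the Heisenberg group: each operator σ_ℏ(s,x,y) is a surjective linear isometry of L²(ℝ,ℂ), and σ_ℏ(g·g') = σ_ℏ(g)∘σ_ℏ(g') for all g, g' in the Heisenberg group. -/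
open MeasureTheory

/-- The multiplication law of the one-dimensional Heisenberg group `H¹ = ℝ³`:
`(s,x,y)·(s',x',y') = (s+s'+(xy'−yx')/2, x+x', y+y')`. -/
noncomputable def heisMul (g g' : ℝ × ℝ × ℝ) : ℝ × ℝ × ℝ :=
  (g.1 + g'.1 + (g.2.1 * g'.2.2 - g.2.2 * g'.2.1) / 2, g.2.1 + g'.2.1, g.2.2 + g'.2.2)

/-- The function `t ↦ exp(i(2sℏ − √(2ℏ)·y·t + ℏ·x·y))·f(t − √(2ℏ)·x)`. -/
noncomputable def schrodingerFun (ℏ : ℝ) (g : ℝ × ℝ × ℝ) (f : ℝ → ℂ) (t : ℝ) : ℂ :=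
  Complex.exp (Complex.I *
      ((2 * g.1 * ℏ - Real.sqrt (2 * ℏ) * g.2.2 * t + ℏ * g.2.1 * g.2.2 : ℝ) : ℂ)) *
    f (t - Real.sqrt (2 * ℏ) * g.2.1)

lemma norm_schrodingerFun (ℏ : ℝ) (g : ℝ × ℝ × ℝ) (f : ℝ → ℂ) (t : ℝ) :
    ‖schrodingerFun ℏ g f t‖ = ‖f (t - Real.sqrt (2 * ℏ) * g.2.1)‖ := by
  rw [schrodingerFun, norm_mul, mul_comm Complex.I, Complex.norm_exp_ofReal_mul_I, one_mul]

lemma schrodingerFun_congr_ae (ℏ : ℝ) (g : ℝ × ℝ × ℝ) {f f' : ℝ → ℂ} (h : f =ᵐ[volume] f') :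
    schrodingerFun ℏ g f =ᵐ[volume] schrodingerFun ℏ g f' := by
  filter_upwards [(measurePreserving_sub_right volume
    (Real.sqrt (2 * ℏ) * g.2.1)).quasiMeasurePreserving.ae_eq_comp h] with t ht
  simp only [Function.comp_apply] at ht
  simp only [schrodingerFun, ht]

lemma schrodingerFun_heisMul {ℏ : ℝ} (hℏ : 0 ≤ ℏ) (g g' : ℝ × ℝ × ℝ) (f : ℝ → ℂ) :
    schrodingerFun ℏ (heisMul g g') f = schrodingerFun ℏ g (schrodingerFun ℏ g' f) := by
  ext t
  have hsq : Real.sqrt (2 * ℏ) * Real.sqrt (2 * ℏ) = 2 * ℏ := Real.mul_self_sqrt (by positivity)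
  simp only [schrodingerFun, heisMul]
  rw [← mul_assoc, ← Complex.exp_add, ← mul_add, ← Complex.ofReal_add]
  congr 1
  · congr 3
    linear_combination (-g.2.1 * g'.2.2) * hsq
  · congr 1
    ring

lemma schrodingerFun_zero (ℏ : ℝ) (f : ℝ → ℂ) : schrodingerFun ℏ (0, 0, 0) f = f := by
  ext t
  simp [schrodingerFun]

lemma memLp_schrodingerFun (ℏ : ℝ) (g : ℝ × ℝ × ℝ) {p : ENNReal} {f : ℝ → ℂ}
    (hf : MemLp f p volume) : MemLp (schrodingerFun ℏ g f) p volume := by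
  have htrans := hf.comp_measurePreserving
    (measurePreserving_sub_right volume (Real.sqrt (2 * ℏ) * g.2.1))
  refine htrans.of_le ?_ (.of_forall fun t => (norm_schrodingerFun ℏ g f t).le)
  exact (Continuous.aestronglyMeasurable (by fun_prop)).mul htrans.1

lemma eLpNorm_schrodingerFun (ℏ : ℝ) (g : ℝ × ℝ × ℝ) (p : ENNReal) {f : ℝ → ℂ}
    (hf : AEStronglyMeasurable f volume) :
    eLpNorm (schrodingerFun ℏ g f) p volume = eLpNorm f p volume := by
  rw [← eLpNorm_comp_measurePreserving hf
    (measurePreserving_sub_right volume (Real.sqrt (2 * ℏ) * g.2.1))]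
  exact eLpNorm_congr_norm_ae (.of_forall (norm_schrodingerFun ℏ g f))

/-- The operator `σ_ℏ(g)` as a linear isometry of `L²(ℝ,ℂ)`. -/
noncomputable def schrodingerIsometry (ℏ : ℝ) (g : ℝ × ℝ × ℝ) :
    Lp ℂ 2 (volume : Measure ℝ) →ₗᵢ[ℂ] Lp ℂ 2 (volume : Measure ℝ) where
  toFun f := (memLp_schrodingerFun ℏ g (Lp.memLp f)).toLp _
  map_add' f f' := by
    rw [← MemLp.toLp_add, MemLp.toLp_eq_toLp_iff]
    refine (schrodingerFun_congr_ae ℏ g (Lp.coeFn_add f f')).trans (.of_forall fun t => ?_)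
    simp only [schrodingerFun, Pi.add_apply, mul_add]
  map_smul' c f := by
    rw [RingHom.id_apply, ← MemLp.toLp_const_smul, MemLp.toLp_eq_toLp_iff]
    refine (schrodingerFun_congr_ae ℏ g (Lp.coeFn_smul c f)).trans (.of_forall fun t => ?_)
    simp only [schrodingerFun, Pi.smul_apply, smul_eq_mul, mul_left_comm]
  norm_map' f := by
    change ‖(memLp_schrodingerFun ℏ g (Lp.memLp f)).toLp _‖ = ‖f‖
    rw [Lp.norm_toLp, eLpNorm_schrodingerFun ℏ g 2 (Lp.aestronglyMeasurable f), Lp.norm_def]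

lemma coeFn_schrodingerIsometry (ℏ : ℝ) (g : ℝ × ℝ × ℝ) (f : Lp ℂ 2 (volume : Measure ℝ)) :
    schrodingerIsometry ℏ g f =ᵐ[volume] schrodingerFun ℏ g f :=
  MemLp.coeFn_toLp (memLp_schrodingerFun ℏ g (Lp.memLp f))

lemma schrodingerIsometry_heisMul {ℏ : ℝ} (hℏ : 0 ≤ ℏ) (g g' : ℝ × ℝ × ℝ)
    (f : Lp ℂ 2 (volume : Measure ℝ)) :
    schrodingerIsometry ℏ (heisMul g g') f =
      schrodingerIsometry ℏ g (schrodingerIsometry ℏ g' f) := by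
  apply Lp.ext
  calc schrodingerIsometry ℏ (heisMul g g') f
      =ᵐ[volume] schrodingerFun ℏ (heisMul g g') f := coeFn_schrodingerIsometry ..
    _ = schrodingerFun ℏ g (schrodingerFun ℏ g' f) := schrodingerFun_heisMul hℏ ..
    _ =ᵐ[volume] schrodingerFun ℏ g (schrodingerIsometry ℏ g' f) :=
      schrodingerFun_congr_ae ℏ g (coeFn_schrodingerIsometry ℏ g' f).symm
    _ =ᵐ[volume] schrodingerIsometry ℏ g (schrodingerIsometry ℏ g' f) :=
      (coeFn_schrodingerIsometry ..).symm

lemma schrodingerIsometry_zero (ℏ : ℝ) (f : Lp ℂ 2 (volume : Measure ℝ)) :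
    schrodingerIsometry ℏ (0, 0, 0) f = f := by
  apply Lp.ext
  simpa only [schrodingerFun_zero] using coeFn_schrodingerIsometry ℏ (0, 0, 0) f

lemma heisMul_neg (g : ℝ × ℝ × ℝ) : heisMul g (-g) = (0, 0, 0) := by
  simp [heisMul, mul_comm]

lemma schrodingerIsometry_surjective {ℏ : ℝ} (hℏ : 0 ≤ ℏ) (g : ℝ × ℝ × ℝ) :
    Function.Surjective (schrodingerIsometry ℏ g) := fun f =>
  ⟨schrodingerIsometry ℏ (-g) f, by
    rw [← schrodingerIsometry_heisMul hℏ, heisMul_neg, schrodingerIsometry_zero]⟩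

/-- For every `ℏ > 0` the Schrödinger representation
`[σ_ℏ(s,x,y)f](t) = exp(i(2sℏ − √(2ℏ)·y·t + ℏ·x·y))·f(t − √(2ℏ)·x)` is a
unitary representation of the Heisenberg group on `L²(ℝ,ℂ)`: each operator is a
surjective linear isometry and `σ_ℏ(g·g') = σ_ℏ(g)∘σ_ℏ(g')`. -/
theorem schrodinger_representation_unitary :
    ∀ ℏ : ℝ, 0 < ℏ →
      ∃ σ : ℝ × ℝ × ℝ → (Lp ℂ 2 (volume : Measure ℝ) ≃ₗᵢ[ℂ] Lp ℂ 2 (volume : Measure ℝ)),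
        (∀ (s x y : ℝ) (f : Lp ℂ 2 (volume : Measure ℝ)),
          (σ (s, x, y) f : ℝ → ℂ) =ᵐ[volume] fun t : ℝ =>
            Complex.exp (Complex.I *
                ((2 * s * ℏ - Real.sqrt (2 * ℏ) * y * t + ℏ * x * y : ℝ) : ℂ)) *
              (f : ℝ → ℂ) (t - Real.sqrt (2 * ℏ) * x)) ∧
        (∀ (g g' : ℝ × ℝ × ℝ) (f : Lp ℂ 2 (volume : Measure ℝ)),
          σ (heisMul g g') f = σ g (σ g' f)) := by
  intro ℏ hℏ
  refine ⟨fun g => LinearIsometryEquiv.ofSurjective (schrodingerIsometry ℏ g)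
    (schrodingerIsometry_surjective hℏ.le g), fun s x y f => ?_, fun g g' f => ?_⟩
  · exact coeFn_schrodingerIsometry ℏ (s, x, y) f
  · exact schrodingerIsometry_heisMul hℏ.le g g' f
end

section
/- Spectral mapping theorem for the jet-valued spectrum of a matrix: let φ(z) = Σ_{n≥0} c_n·zⁿ be a complex power series with radius of convergence R ∈ (0, ∞], and let A be an N×N complex matrix whose spectral radius is strictly less than R, so that φ(A) = Σ_{n≥0} c_n·Aⁿ converges. Let λ ∈ ℂ, x ∈ ℂᴺ and k ≥ 1 satisfy (A − λI)ᵏx = 0 and (A − λI)^{k−1}x ≠ 0 (so x is a root vector of order k for the eigenvalue λ, and |λ| < R). Suppose d ≥ 1 is such that the derivatives φ⁽ʲ⁾(λ) = 0 for all 1 ≤ j < d while φ⁽ᵈ⁾(λ) ≠ 0 (i.e. d is the degree of the zero of φ(z) − φ(λ) at z = λ). Then for every integer m ≥ 0, (φ(A) − φ(λ)·I)ᵐ x = 0 if and only if m·d ≥ k; in particular x is a root vector of φ(A) for the eigenvalue φ(λ) of order exactly ⌈k/d⌉. -/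
open Matrix

section

open Polynomial Filter Topology

/-- Locally uniform limits of holomorphic functions commute with iterated derivatives. -/
theorem TendstoLocallyUniformlyOn.iteratedDeriv {ι : Type*} {l : Filter ι} [l.NeBot]
    {F : ι → ℂ → ℂ} {f : ℂ → ℂ} {U : Set ℂ} (hf : TendstoLocallyUniformlyOn F f l U)
    (hF : ∀ i, DifferentiableOn ℂ (F i) U) (hU : IsOpen U) (j : ℕ) :
    TendstoLocallyUniformlyOn (fun i => _root_.iteratedDeriv j (F i))
      (_root_.iteratedDeriv j f) l U := by
  have hdiff : ∀ j i, DifferentiableOn ℂ (_root_.iteratedDeriv j (F i)) U := by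
    intro j i
    induction j with
    | zero => simpa using hF i
    | succ j ih => rw [iteratedDeriv_succ]; exact ih.deriv hU
  induction j with
  | zero => simpa using hf
  | succ j ih =>
    simp only [iteratedDeriv_succ]
    exact ih.deriv (Eventually.of_forall (hdiff j)) hU

/-- Inside the disc of convergence, the Taylor coefficients of the sum of a power series are
obtained by differentiating term by term. -/
theorem hasSum_taylorCoeff_of_summable (c : ℕ → ℂ) (r : ℝ)
    (hr : Summable fun n : ℕ => ‖c n‖ * r ^ n) {z : ℂ} (hz : ‖z‖ < r) (j : ℕ) :
    HasSum (fun n : ℕ => c n * (z ^ (n - j) * (n.choose j : ℂ)))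
      (iteratedDeriv j (fun w : ℂ => ∑' n : ℕ, c n * w ^ n) z / (j.factorial : ℂ)) := by
  have hlim : TendstoLocallyUniformlyOn
      (fun (s : Finset ℕ) (w : ℂ) => ∑ n ∈ s, c n * w ^ n)
      (fun w => ∑' n : ℕ, c n * w ^ n) atTop (Metric.ball 0 r) := by
    refine (tendstoUniformlyOn_tsum hr fun n w hw => ?_).tendstoLocallyUniformlyOn
    rw [norm_mul, norm_pow]
    have : ‖w‖ < r := by simpa using hw
    gcongr
  have hsum : HasSum (fun n : ℕ => iteratedDeriv j (fun w : ℂ => c n * w ^ n) z)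
      (iteratedDeriv j (fun w : ℂ => ∑' n : ℕ, c n * w ^ n) z) := by
    have := (hlim.iteratedDeriv (fun s => by fun_prop) Metric.isOpen_ball j).tendsto_at
      (a := z) (by simpa using hz)
    refine this.congr fun s => ?_
    exact iteratedDeriv_fun_sum fun n _ => by fun_prop
  refine (hsum.div_const (j.factorial : ℂ)).congr_fun ?_
  intro n
  have hj : (j.factorial : ℂ) ≠ 0 := by exact_mod_cast j.factorial_ne_zero
  rw [iteratedDeriv_const_mul_field, iteratedDeriv_pow,
    Nat.descFactorial_eq_factorial_mul_choose]
  push_cast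
  field_simp

variable {n : Type*} [Fintype n] [DecidableEq n]

theorem Matrix.mem_spectrum_of_pow_sub_mulVec (A : Matrix n n ℂ) (μ : ℂ) (x : n → ℂ) {k : ℕ}
    (h0 : ((A - μ • (1 : Matrix n n ℂ)) ^ k) *ᵥ x = 0) (hx : x ≠ 0) : μ ∈ spectrum ℂ A := by
  rw [spectrum.mem_iff, Algebra.algebraMap_eq_smul_one, IsUnit.sub_iff]
  intro h
  apply hx
  obtain ⟨u, hu⟩ := h.pow k
  rw [← hu] at h0
  simpa [mulVec_mulVec] using congrArg (fun v => (↑u⁻¹ : Matrix n n ℂ) *ᵥ v) h0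

/-- The binomial expansion of `A ^ i` around `μ`, truncated on `ker (A - μ) ^ K`. -/
theorem Matrix.pow_mulVec_eq_sum_choose (A : Matrix n n ℂ) (μ : ℂ) (v : n → ℂ) {K : ℕ}
    (hv : ((A - μ • (1 : Matrix n n ℂ)) ^ K) *ᵥ v = 0) (i : ℕ) :
    (A ^ i) *ᵥ v = ∑ j ∈ Finset.range K,
      (μ ^ (i - j) * (i.choose j : ℂ)) • ((A - μ • (1 : Matrix n n ℂ)) ^ j) *ᵥ v := by
  set B := A - μ • (1 : Matrix n n ℂ) with hB
  have hA : A = B + μ • (1 : Matrix n n ℂ) := by simp [hB]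
  have hcomm : Commute B (μ • (1 : Matrix n n ℂ)) := (Commute.one_right B).smul_right μ
  have hterm : ∀ j, (B ^ j * (μ • (1 : Matrix n n ℂ)) ^ (i - j) * (i.choose j : Matrix n n ℂ)) *ᵥ v
      = (μ ^ (i - j) * (i.choose j : ℂ)) • (B ^ j) *ᵥ v := by
    intro j
    rw [← nsmul_eq_mul', _root_.smul_pow, one_pow, mul_smul_comm, mul_one, ← Nat.cast_smul_eq_nsmul ℂ,
      smul_smul, smul_mulVec, mul_comm]
  rw [hA, hcomm.add_pow, sum_mulVec, Finset.sum_congr rfl fun j _ => hterm j]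
  trans ∑ j ∈ Finset.range (i + 1 + K), (μ ^ (i - j) * (i.choose j : ℂ)) • (B ^ j) *ᵥ v
  · refine Finset.sum_subset (Finset.range_mono (by omega)) fun j _ hj => ?_
    rw [Nat.choose_eq_zero_of_lt (by simpa using hj)]
    simp
  · refine (Finset.sum_subset (Finset.range_mono (by omega)) fun j _ hj => ?_).symm
    have : j = (j - K) + K := by simp at hj; omega
    rw [this, pow_add, ← mulVec_mulVec, hv]
    simp

/-- If `S` acts on `ker B ^ k` as `B ^ d * q(B)` with `q(0) ≠ 0`, then a vector annihilated by
`B ^ k` but not by `B ^ (k - 1)` is annihilated by `S ^ m` exactly when `k ≤ m * d`. -/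
theorem Matrix.pow_mulVec_eq_zero_iff_of_eq_aeval {K : Type*} [Field K] (B S : Matrix n n K)
    (x : n → K) {k d : ℕ} (h0 : (B ^ k) *ᵥ x = 0)
    (h1 : (B ^ (k - 1)) *ᵥ x ≠ 0) (q : K[X]) (hq : q.coeff 0 ≠ 0)
    (hS : ∀ v, (B ^ k) *ᵥ v = 0 → S *ᵥ v = (aeval B (X ^ d * q)) *ᵥ v) (m : ℕ) :
    (S ^ m) *ᵥ x = 0 ↔ k ≤ m * d := by
  have hker : ∀ p : K[X], (B ^ k) *ᵥ ((aeval B p) *ᵥ x) = 0 := by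
    intro p
    have : B ^ k * aeval B p = aeval B p * B ^ k := by
      simpa using congrArg (aeval B) (mul_comm (X ^ k) p)
    rw [mulVec_mulVec, this, ← mulVec_mulVec, h0, mulVec_zero]
  have hpow : (S ^ m) *ᵥ x = (aeval B ((X ^ d * q) ^ m)) *ᵥ x := by
    induction m with
    | zero => simp
    | succ m ih =>
      rw [pow_succ', ← mulVec_mulVec, ih, hS _ (hker _), mulVec_mulVec, ← map_mul, ← pow_succ']
  have hsplit : (S ^ m) *ᵥ x = (aeval B (q ^ m)) *ᵥ ((B ^ (m * d)) *ᵥ x) := by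
    rw [hpow, mul_pow, ← pow_mul, mul_comm d m, mul_comm, map_mul, mulVec_mulVec]
    simp
  have hvanish : ∀ {a b : ℕ}, a ≤ b → (B ^ a) *ᵥ x = 0 → (B ^ b) *ᵥ x = 0 := by
    intro a b hab ha
    rw [← Nat.sub_add_cancel hab, pow_add, ← mulVec_mulVec, ha, mulVec_zero]
  constructor
  · intro h
    by_contra! hlt
    refine h1 (hvanish (a := m * d) (by omega) ?_)
    have hcop : IsCoprime (q ^ m) (X ^ k) :=
      ((Polynomial.irreducible_X.coprime_iff_not_dvd.2
        fun hdvd => hq (X_dvd_iff.1 hdvd)).symm).pow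
    obtain ⟨a, b, hab⟩ := hcop
    have hone : aeval B a * aeval B (q ^ m) + aeval B b * B ^ k = 1 := by
      simpa using congrArg (aeval B) hab
    rw [← one_mulVec ((B ^ (m * d)) *ᵥ x), ← hone, add_mulVec, ← mulVec_mulVec, ← mulVec_mulVec,
      ← hsplit, h, mulVec_mulVec x, ← pow_add, hvanish (Nat.le_add_right k (m * d)) h0]
    simp
  · intro h
    rw [hsplit, hvanish h h0, mulVec_zero]

end

/-- **spectral mapping for the jet-valued spectrum.** Let
`φ(z) = Σ c_n zⁿ` have radius of convergence `R ∈ (0,∞]`, let `A` be an `N×N`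
matrix whose eigenvalues all have norm `< R` (spectral radius `< R`), so that
`φ(A) = Σ c_n Aⁿ` converges. If `x` is a root vector of `A` of order `k ≥ 1`
for the eigenvalue `λ` and `d ≥ 1` is the degree of the zero of `φ(z) − φ(λ)`
at `z = λ`, then `(φ(A) − φ(λ)·I)ᵐ x = 0 ↔ m·d ≥ k`; in particular `x` is a
root vector of `φ(A)` for `φ(λ)` of order exactly `⌈k/d⌉`. -/
theorem jet_spectral_mapping {N : ℕ} (c : ℕ → ℂ) (R : ENNReal) (hR : 0 < R)
    (hconv : ∀ z : ℂ, (‖z‖₊ : ENNReal) < R → Summable fun n : ℕ => ‖c n * z ^ n‖)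
    (A : Matrix (Fin N) (Fin N) ℂ)
    (hA : ∀ μ ∈ spectrum ℂ A, (‖μ‖₊ : ENNReal) < R)
    (hAconv : Summable fun n : ℕ => c n • A ^ n)
    (lam : ℂ) (x : Fin N → ℂ) (k : ℕ) (hk : 1 ≤ k)
    (hx1 : ((A - lam • (1 : Matrix (Fin N) (Fin N) ℂ)) ^ k).mulVec x = 0)
    (hx2 : ((A - lam • (1 : Matrix (Fin N) (Fin N) ℂ)) ^ (k - 1)).mulVec x ≠ 0)
    (d : ℕ) (hd : 1 ≤ d)
    (hder0 : ∀ j : ℕ, 1 ≤ j → j < d →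
      iteratedDeriv j (fun z : ℂ => ∑' n : ℕ, c n * z ^ n) lam = 0)
    (hderd : iteratedDeriv d (fun z : ℂ => ∑' n : ℕ, c n * z ^ n) lam ≠ 0) :
    (∀ m : ℕ,
      (((∑' n : ℕ, c n • A ^ n) -
          (∑' n : ℕ, c n * lam ^ n) • (1 : Matrix (Fin N) (Fin N) ℂ)) ^ m).mulVec x = 0
        ↔ k ≤ m * d) ∧
    (((∑' n : ℕ, c n • A ^ n) -
        (∑' n : ℕ, c n * lam ^ n) • (1 : Matrix (Fin N) (Fin N) ℂ)) ^
          ((k + d - 1) / d)).mulVec x = 0 ∧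
    (((∑' n : ℕ, c n • A ^ n) -
        (∑' n : ℕ, c n * lam ^ n) • (1 : Matrix (Fin N) (Fin N) ℂ)) ^
          ((k + d - 1) / d - 1)).mulVec x ≠ 0 := by
  set φ : ℂ → ℂ := fun z => ∑' n : ℕ, c n * z ^ n with hφ
  set B := A - lam • (1 : Matrix (Fin N) (Fin N) ℂ) with hB
  set S := (∑' n : ℕ, c n • A ^ n) -
    (∑' n : ℕ, c n * lam ^ n) • (1 : Matrix (Fin N) (Fin N) ℂ) with hS
  have hx : x ≠ 0 := by
    rintro rfl
    simp at hx2
  obtain ⟨r, hlamr, hrR⟩ :=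
    ENNReal.lt_iff_exists_nnreal_btwn.1 (hA lam (mem_spectrum_of_pow_sub_mulVec A lam x hx1 hx))
  have hr : Summable fun n : ℕ => ‖c n‖ * (r : ℝ) ^ n := by
    simpa using hconv (r : ℝ) (by simpa using hrR)
  have hlam : ‖lam‖ < r := by exact_mod_cast hlamr
  let a : ℕ → ℂ := fun j => iteratedDeriv j φ lam / (j.factorial : ℂ)
  have hexp : ∀ v, (B ^ (d + k)) *ᵥ v = 0 →
      (∑' n : ℕ, c n • A ^ n) *ᵥ v = ∑ j ∈ Finset.range (d + k), a j • (B ^ j) *ᵥ v := by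
    intro v hv
    have hleft : HasSum (fun n : ℕ => (c n • A ^ n) *ᵥ v) ((∑' n : ℕ, c n • A ^ n) *ᵥ v) :=
      hAconv.hasSum.map (mulVec.addMonoidHomLeft v) (continuous_id.matrix_mulVec continuous_const)
    have hright : HasSum
        (fun n : ℕ => ∑ j ∈ Finset.range (d + k),
          (c n * (lam ^ (n - j) * (n.choose j : ℂ))) • (B ^ j) *ᵥ v)
        (∑ j ∈ Finset.range (d + k), a j • (B ^ j) *ᵥ v) :=
      hasSum_sum fun j _ => (hasSum_taylorCoeff_of_summable c r hr hlam j).smul_const _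
    refine hleft.unique (hright.congr_fun fun n => ?_)
    rw [smul_mulVec, pow_mulVec_eq_sum_choose A lam v hv, Finset.smul_sum]
    simp only [smul_smul, hB]
  let q : Polynomial ℂ := ∑ j ∈ Finset.range k, Polynomial.C (a (d + j)) * Polynomial.X ^ j
  have hq : q.coeff 0 ≠ 0 := by
    have : q.coeff 0 = a d := by
      simp [q, Polynomial.coeff_X_pow, Finset.sum_ite_eq, show 0 < k from hk]
    rw [this]
    exact div_ne_zero hderd (by exact_mod_cast d.factorial_ne_zero)
  have hlow : ∀ v, ∑ j ∈ Finset.range d, a j • (B ^ j) *ᵥ v = φ lam • v := by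
    intro v
    rw [Finset.sum_eq_single_of_mem 0 (Finset.mem_range.2 hd)]
    · simp [a]
    · intro j hj hj0
      simp [a, hder0 j (by omega) (by simpa using hj)]
  have hact : ∀ v, (B ^ k) *ᵥ v = 0 →
      S *ᵥ v = (Polynomial.aeval B (Polynomial.X ^ d * q)) *ᵥ v := by
    intro v hv
    have hv' : (B ^ (d + k)) *ᵥ v = 0 := by
      rw [pow_add, ← mulVec_mulVec, hv, mulVec_zero]
    rw [hS, sub_mulVec, hexp v hv', Finset.sum_range_add, hlow, smul_mulVec, one_mulVec,
      add_sub_cancel_left]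
    simp only [q, map_mul, map_sum, map_pow, Polynomial.aeval_X, Polynomial.aeval_C,
      Finset.mul_sum, sum_mulVec]
    refine Finset.sum_congr rfl fun j _ => ?_
    rw [← Algebra.smul_def, mul_smul_comm, ← pow_add, smul_mulVec]
  have hiff := pow_mulVec_eq_zero_iff_of_eq_aeval B S x hx1 hx2 q hq hact
  have hdiv := Nat.div_add_mod (k + d - 1) d
  have hmod := Nat.mod_lt (k + d - 1) hd
  rw [mul_comm] at hdiv
  refine ⟨hiff, (hiff _).2 (by omega), fun h => ?_⟩
  have := (hiff _).1 h
  rw [Nat.sub_mul] at this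
  omega
end

section
/- The image of the p-mechanical bracket under the one-dimensional representations of the Heisenberg group is the Poisson bracket: for all Schwartz functions k₁, k₂ on ℝ³ and all (q, p) ∈ ℝ², −∫_{ℝ³} s·(k₁*k₂ − k₂*k₁)(s, x, y)·exp(i(xq + yp)) ds dx dy = (∂k̂₁/∂q)(q,p)·(∂k̂₂/∂p)(q,p) − (∂k̂₁/∂p)(q,p)·(∂k̂₂/∂q)(q,p), where k̂(q, p) = ∫_{ℝ³} k(s, x, y)·exp(i(xq + yp)) ds dx dy and * denotes convolution over the Heisenberg group. (The left-hand side is the value on the commutator of the antiderivative operator A with respect to s, composed with the one-dimensional representation ρ_{(q,p)}.) -/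
open MeasureTheory

/-- Inversion in the Heisenberg group: `(s,x,y)⁻¹ = (−s,−x,−y)`. -/
def heisInv (h : ℝ × ℝ × ℝ) : ℝ × ℝ × ℝ := (-h.1, -h.2.1, -h.2.2)

/-- Convolution over the Heisenberg group (with Lebesgue measure on `ℝ³` as
Haar measure): `(k₁*k₂)(g) = ∫_{H¹} k₁(h)·k₂(h⁻¹·g) dh`. -/
noncomputable def heisConv (k₁ k₂ : ℝ × ℝ × ℝ → ℂ) (g : ℝ × ℝ × ℝ) : ℂ :=
  ∫ h : ℝ × ℝ × ℝ, k₁ h * k₂ (heisMul (heisInv h) g)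

/-- The image `k̂(q, p) = ∫_{ℝ³} k(s, x, y)·exp(i(xq + yp)) ds dx dy` of `k`
under the one-dimensional representation `ρ_{(q,p)}` of the Heisenberg group. -/
noncomputable def heisHat (k : ℝ × ℝ × ℝ → ℂ) (q p : ℝ) : ℂ :=
  ∫ w : ℝ × ℝ × ℝ, k w * Complex.exp (Complex.I * ((w.2.1 * q + w.2.2 * p : ℝ) : ℂ))

instance instIsAddHaarMeasureVolumeHeis : (volume : Measure (ℝ × ℝ × ℝ)).IsAddHaarMeasure :=
  haveI : (volume : Measure (ℝ × ℝ)).IsAddHaarMeasure :=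
    Measure.prod.instIsAddHaarMeasure volume volume
  Measure.prod.instIsAddHaarMeasure volume volume

/-- Left translations of the Heisenberg group preserve Lebesgue measure. -/
theorem measurePreserving_heisMul_left (h : ℝ × ℝ × ℝ) :
    MeasurePreserving (heisMul h) volume volume := by
  have shear : MeasurePreserving
      (fun z : (ℝ × ℝ) × ℝ =>
        ((h.2.1, h.2.2) + z.1, (h.1 + (h.2.1 * z.1.2 - h.2.2 * z.1.1) / 2) + z.2))
      ((volume : Measure (ℝ × ℝ)).prod volume) ((volume : Measure (ℝ × ℝ)).prod volume) := by
    refine MeasurePreserving.skew_product (f := fun v : ℝ × ℝ => (h.2.1, h.2.2) + v)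
      (g := fun v t => (h.1 + (h.2.1 * v.2 - h.2.2 * v.1) / 2) + t)
      (measurePreserving_add_left volume _) (by fun_prop) ?_
    exact Filter.Eventually.of_forall fun v => (measurePreserving_add_left volume _).map_eq
  have := (Measure.measurePreserving_swap.comp shear).comp
    (Measure.measurePreserving_swap (μ := (volume : Measure ℝ)) (ν := (volume : Measure (ℝ × ℝ))))
  refine cast (congrArg (fun f => MeasurePreserving f volume volume) ?_) this
  funext g
  simp only [Function.comp, Prod.swap, heisMul, Prod.ext_iff, and_self, and_true,
    Prod.fst_add, Prod.snd_add]
  ring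

theorem continuous_heisMul : Continuous fun z : (ℝ × ℝ × ℝ) × (ℝ × ℝ × ℝ) => heisMul z.1 z.2 := by
  unfold heisMul
  fun_prop

theorem continuous_heisInv : Continuous heisInv := by
  unfold heisInv
  fun_prop

theorem heisMul_heisInv_cancel_left (h g : ℝ × ℝ × ℝ) :
    heisMul (heisInv h) (heisMul h g) = g := by
  simp only [heisMul, heisInv, Prod.ext_iff]
  refine ⟨?_, ?_, ?_⟩ <;> ring

/-- The map `(h, g) ↦ (h, h·g)` preserves Lebesgue measure. -/
theorem measurePreserving_prod_heisMul :
    MeasurePreserving (fun z : (ℝ × ℝ × ℝ) × (ℝ × ℝ × ℝ) => (z.1, heisMul z.1 z.2))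
      (volume.prod volume) (volume.prod volume) :=
  MeasurePreserving.skew_product (MeasurePreserving.id volume) continuous_heisMul.measurable
    (Filter.Eventually.of_forall fun h => (measurePreserving_heisMul_left h).map_eq)

/-- The one-dimensional representation `(s, x, y) ↦ exp(i(xq + yp))`. -/
noncomputable def heisChar (q p : ℝ) (w : ℝ × ℝ × ℝ) : ℂ :=
  Complex.exp (Complex.I * ((w.2.1 * q + w.2.2 * p : ℝ) : ℂ))

theorem heisChar_apply (q p : ℝ) (w : ℝ × ℝ × ℝ) :
    heisChar q p w = Complex.exp (Complex.I * ((w.2.1 * q + w.2.2 * p : ℝ) : ℂ)) := rfl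

theorem norm_heisChar (q p : ℝ) (w : ℝ × ℝ × ℝ) : ‖heisChar q p w‖ = 1 := by
  rw [heisChar, mul_comm, Complex.norm_exp_ofReal_mul_I]

@[fun_prop]
theorem continuous_heisChar (q p : ℝ) : Continuous (heisChar q p) := by
  unfold heisChar
  fun_prop

theorem heisChar_heisMul (q p : ℝ) (h g : ℝ × ℝ × ℝ) :
    heisChar q p (heisMul h g) = heisChar q p h * heisChar q p g := by
  simp only [heisChar, heisMul, ← Complex.exp_add]
  congr 1
  push_cast
  ring

/-- The moment `∫ a·k·exp(i(xq + yp))` of `k` with weight `a`. -/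
noncomputable def heisMoment (a : ℝ × ℝ × ℝ → ℝ) (k : ℝ × ℝ × ℝ → ℂ) (q p : ℝ) : ℂ :=
  ∫ w, (a w : ℂ) * k w * heisChar q p w

theorem SchwartzMap.integrable_ofReal_mul (k : SchwartzMap (ℝ × ℝ × ℝ) ℂ)
    {a : ℝ × ℝ × ℝ → ℝ} (ha : Continuous a) (hle : ∀ w, |a w| ≤ ‖w‖) :
    Integrable fun w => (a w : ℂ) * k w := by
  refine (k.integrable_pow_mul volume 1).mono'
    (by have := k.continuous; exact Continuous.aestronglyMeasurable (by fun_prop)) ?_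
  refine Filter.Eventually.of_forall fun w => ?_
  rw [norm_mul, Complex.norm_real, Real.norm_eq_abs, pow_one]
  gcongr
  exact hle w

theorem MeasureTheory.Integrable.mul_heisChar {f : ℝ × ℝ × ℝ → ℂ} (hf : Integrable f)
    (q p : ℝ) : Integrable fun w => f w * heisChar q p w :=
  hf.mul_bdd (c := 1) (continuous_heisChar q p).aestronglyMeasurable
    (Filter.Eventually.of_forall fun w => (norm_heisChar q p w).le)

theorem abs_fst_le_norm (w : ℝ × ℝ × ℝ) : |w.1| ≤ ‖w‖ := norm_fst_le w

theorem abs_snd_fst_le_norm (w : ℝ × ℝ × ℝ) : |w.2.1| ≤ ‖w‖ :=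
  (norm_fst_le w.2).trans (norm_snd_le w)

theorem abs_snd_snd_le_norm (w : ℝ × ℝ × ℝ) : |w.2.2| ≤ ‖w‖ :=
  (norm_snd_le w.2).trans (norm_snd_le w)

/-- Differentiation under the integral sign for oscillatory integrals with linear phase. -/
theorem hasDerivAt_integral_mul_cexp {α : Type*} [MeasurableSpace α] {μ : Measure α}
    {k : α → ℂ} {a b : α → ℝ} (hk : Integrable k μ) (ha : Measurable a) (hb : Measurable b)
    (hak : Integrable (fun w => (a w : ℂ) * k w) μ) (t : ℝ) :
    HasDerivAt (fun t : ℝ => ∫ w, k w * Complex.exp (Complex.I * ((a w * t + b w : ℝ) : ℂ)) ∂μ)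
      (Complex.I * ∫ w, (a w : ℂ) * k w *
        Complex.exp (Complex.I * ((a w * t + b w : ℝ) : ℂ)) ∂μ) t := by
  have hnorm (u : ℝ) : ‖Complex.exp (Complex.I * (u : ℂ))‖ = 1 := by
    rw [mul_comm, Complex.norm_exp_ofReal_mul_I]
  have hmeas (t : ℝ) : AEStronglyMeasurable
      (fun w => Complex.exp (Complex.I * ((a w * t + b w : ℝ) : ℂ))) μ :=
    Measurable.aestronglyMeasurable (by fun_prop)
  rw [← integral_const_mul]
  refine (hasDerivAt_integral_of_dominated_loc_of_deriv_le
    (F := fun t w => k w * Complex.exp (Complex.I * ((a w * t + b w : ℝ) : ℂ)))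
    (F' := fun t w => Complex.I *
      ((a w : ℂ) * k w * Complex.exp (Complex.I * ((a w * t + b w : ℝ) : ℂ))))
    (bound := fun w => ‖(a w : ℂ) * k w‖) Filter.univ_mem
    (Filter.Eventually.of_forall fun t => hk.aestronglyMeasurable.mul (hmeas t))
    (hk.mul_bdd (c := 1) (hmeas t) (Filter.Eventually.of_forall fun w => (hnorm _).le))
    ((hak.aestronglyMeasurable.mul (hmeas t)).const_mul Complex.I)
    (Filter.Eventually.of_forall fun w t _ => ?_) hak.norm
    (Filter.Eventually.of_forall fun w t _ => ?_)).2
  · simp only [norm_mul, hnorm, Complex.norm_I, one_mul, mul_one, le_refl]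
  · have hphase : HasDerivAt (fun t : ℝ => ((a w * t + b w : ℝ) : ℂ)) (a w : ℂ) t := by
      simpa using (((hasDerivAt_id t).const_mul (a w)).add_const (b w)).ofReal_comp
    refine (((hphase.const_mul Complex.I).cexp).const_mul (k w)).congr_deriv ?_
    ring

theorem hasDerivAt_heisHat_fst (k : SchwartzMap (ℝ × ℝ × ℝ) ℂ) (q p : ℝ) :
    HasDerivAt (fun q' : ℝ => heisHat k q' p)
      (Complex.I * heisMoment (fun w => w.2.1) k q p) q :=
  hasDerivAt_integral_mul_cexp (a := fun w : ℝ × ℝ × ℝ => w.2.1)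
    (b := fun w : ℝ × ℝ × ℝ => w.2.2 * p) k.integrable (by fun_prop) (by fun_prop)
    (k.integrable_ofReal_mul (by fun_prop) abs_snd_fst_le_norm) q

theorem hasDerivAt_heisHat_snd (k : SchwartzMap (ℝ × ℝ × ℝ) ℂ) (q p : ℝ) :
    HasDerivAt (fun p' : ℝ => heisHat k q p')
      (Complex.I * heisMoment (fun w => w.2.2) k q p) p := by
  have := hasDerivAt_integral_mul_cexp (a := fun w : ℝ × ℝ × ℝ => w.2.2)
    (b := fun w : ℝ × ℝ × ℝ => w.2.1 * q) k.integrable (by fun_prop) (by fun_prop)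
    (k.integrable_ofReal_mul (by fun_prop) abs_snd_snd_le_norm) p
  simpa only [heisHat, heisMoment, heisChar, add_comm] using this

/-- The first central moment of a Heisenberg convolution. -/
theorem integral_fst_mul_heisConv (k₁ k₂ : SchwartzMap (ℝ × ℝ × ℝ) ℂ) (q p : ℝ) :
    Integrable (fun w : ℝ × ℝ × ℝ => (w.1 : ℂ) * heisConv k₁ k₂ w * heisChar q p w) ∧
      ∫ w : ℝ × ℝ × ℝ, (w.1 : ℂ) * heisConv k₁ k₂ w * heisChar q p w =
        heisMoment (fun w => w.1) k₁ q p * heisHat k₂ q p +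
          heisHat k₁ q p * heisMoment (fun w => w.1) k₂ q p +
          (heisMoment (fun w => w.2.1) k₁ q p * heisMoment (fun w => w.2.2) k₂ q p -
            heisMoment (fun w => w.2.2) k₁ q p * heisMoment (fun w => w.2.1) k₂ q p) / 2 := by
  set F : (ℝ × ℝ × ℝ) × (ℝ × ℝ × ℝ) → ℂ := fun z =>
    (z.2.1 : ℂ) * (k₁ z.1 * k₂ (heisMul (heisInv z.1) z.2)) * heisChar q p z.2 with hF
  have hFmeas : AEStronglyMeasurable F (volume.prod volume) := by
    have h₁ := k₁.continuous
    have h₂ : Continuous fun z : (ℝ × ℝ × ℝ) × (ℝ × ℝ × ℝ) =>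
        k₂ (heisMul (heisInv z.1) z.2) :=
      k₂.continuous.comp (continuous_heisMul.comp
        ((continuous_heisInv.comp continuous_fst).prodMk continuous_snd))
    have hFcont : Continuous F := by
      refine Continuous.mul (Continuous.mul ?_ (Continuous.mul ?_ h₂)) ?_ <;> fun_prop
    exact hFcont.aestronglyMeasurable
  have hconv : ∀ w : ℝ × ℝ × ℝ,
      (w.1 : ℂ) * heisConv k₁ k₂ w * heisChar q p w = ∫ h, F (h, w) := fun w => by
    simp only [hF, heisConv, integral_const_mul, integral_mul_const]
  have hfactor : ∀ z : (ℝ × ℝ × ℝ) × (ℝ × ℝ × ℝ), F (z.1, heisMul z.1 z.2) =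
      (z.1.1 * k₁ z.1 * heisChar q p z.1) * (k₂ z.2 * heisChar q p z.2) +
        (k₁ z.1 * heisChar q p z.1) * (z.2.1 * k₂ z.2 * heisChar q p z.2) +
        ((z.1.2.1 * k₁ z.1 * heisChar q p z.1) * (z.2.2.2 * k₂ z.2 * heisChar q p z.2) -
          (z.1.2.2 * k₁ z.1 * heisChar q p z.1) *
            (z.2.2.1 * k₂ z.2 * heisChar q p z.2)) / 2 := fun z => by
    simp only [hF, heisMul_heisInv_cancel_left, heisChar_heisMul]
    simp only [heisMul]
    push_cast
    ring
  have hk (k : SchwartzMap (ℝ × ℝ × ℝ) ℂ) := k.integrable (μ := volume) |>.mul_heisChar q p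
  have hs (k : SchwartzMap (ℝ × ℝ × ℝ) ℂ) :=
    (k.integrable_ofReal_mul (a := fun w => w.1) (by fun_prop) abs_fst_le_norm).mul_heisChar q p
  have hx (k : SchwartzMap (ℝ × ℝ × ℝ) ℂ) :=
    (k.integrable_ofReal_mul (a := fun w => w.2.1) (by fun_prop)
      abs_snd_fst_le_norm).mul_heisChar q p
  have hy (k : SchwartzMap (ℝ × ℝ × ℝ) ℂ) :=
    (k.integrable_ofReal_mul (a := fun w => w.2.2) (by fun_prop)
      abs_snd_snd_le_norm).mul_heisChar q p
  have hsk := (hs k₁).mul_prod (hk k₂)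
  have hks := (hk k₁).mul_prod (hs k₂)
  have hxy := (hx k₁).mul_prod (hy k₂)
  have hyx := (hy k₁).mul_prod (hx k₂)
  have hFint : Integrable F (volume.prod volume) := by
    rw [← measurePreserving_prod_heisMul.integrable_comp hFmeas]
    exact ((hsk.add hks).add ((hxy.sub hyx).div_const 2)).congr
      (Filter.Eventually.of_forall fun z => (hfactor z).symm)
  simp only [hconv]
  refine ⟨hFint.integral_prod_right, ?_⟩
  rw [← integral_prod_symm F hFint, ← measurePreserving_prod_heisMul.map_eq,
    integral_map measurePreserving_prod_heisMul.aemeasurable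
      (by rwa [measurePreserving_prod_heisMul.map_eq])]
  simp only [hfactor]
  refine (integral_add (hsk.add hks) ((hxy.sub hyx).div_const 2)).trans ?_
  rw [integral_add' hsk hks, integral_div, integral_sub' hxy hyx,
    integral_prod_mul (fun w : ℝ × ℝ × ℝ => (w.1 : ℂ) * k₁ w * heisChar q p w)
      (fun w => k₂ w * heisChar q p w),
    integral_prod_mul (fun w => k₁ w * heisChar q p w)
      (fun w : ℝ × ℝ × ℝ => (w.1 : ℂ) * k₂ w * heisChar q p w),
    integral_prod_mul (fun w : ℝ × ℝ × ℝ => (w.2.1 : ℂ) * k₁ w * heisChar q p w)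
      (fun w : ℝ × ℝ × ℝ => (w.2.2 : ℂ) * k₂ w * heisChar q p w),
    integral_prod_mul (fun w : ℝ × ℝ × ℝ => (w.2.2 : ℂ) * k₁ w * heisChar q p w)
      (fun w : ℝ × ℝ × ℝ => (w.2.1 : ℂ) * k₂ w * heisChar q p w)]
  rfl

/-- The image of the p-mechanical bracket under the
one-dimensional representations of the Heisenberg group is the Poisson bracket:
`−∫ s·(k₁*k₂ − k₂*k₁)(s,x,y)·e^{i(xq+yp)} ds dx dy
   = ∂k̂₁/∂q·∂k̂₂/∂p − ∂k̂₁/∂p·∂k̂₂/∂q`. -/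
theorem pmechanical_bracket_gives_poisson_bracket
    (k₁ k₂ : SchwartzMap (ℝ × ℝ × ℝ) ℂ) (q p : ℝ) :
    -(∫ w : ℝ × ℝ × ℝ,
        (w.1 : ℂ) * (heisConv (⇑k₁) (⇑k₂) w - heisConv (⇑k₂) (⇑k₁) w) *
          Complex.exp (Complex.I * ((w.2.1 * q + w.2.2 * p : ℝ) : ℂ))) =
      deriv (fun q' : ℝ => heisHat (⇑k₁) q' p) q *
          deriv (fun p' : ℝ => heisHat (⇑k₂) q p') p -
        deriv (fun p' : ℝ => heisHat (⇑k₁) q p') p *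
          deriv (fun q' : ℝ => heisHat (⇑k₂) q' p) q := by
  simp only [← heisChar_apply]
  have h₁₂ := integral_fst_mul_heisConv k₁ k₂ q p
  have h₂₁ := integral_fst_mul_heisConv k₂ k₁ q p
  have hsub : ∀ w : ℝ × ℝ × ℝ,
      (w.1 : ℂ) * (heisConv (⇑k₁) (⇑k₂) w - heisConv (⇑k₂) (⇑k₁) w) * heisChar q p w =
        (w.1 : ℂ) * heisConv (⇑k₁) (⇑k₂) w * heisChar q p w -
          (w.1 : ℂ) * heisConv (⇑k₂) (⇑k₁) w * heisChar q p w := fun w => by ring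
  simp only [hsub]
  rw [integral_sub h₁₂.1 h₂₁.1, h₁₂.2, h₂₁.2, (hasDerivAt_heisHat_fst k₁ q p).deriv,
    (hasDerivAt_heisHat_fst k₂ q p).deriv, (hasDerivAt_heisHat_snd k₁ q p).deriv,
    (hasDerivAt_heisHat_snd k₂ q p).deriv]
  linear_combination
    (heisMoment (fun w => w.2.2) k₁ q p * heisMoment (fun w => w.2.1) k₂ q p -
      heisMoment (fun w => w.2.1) k₁ q p * heisMoment (fun w => w.2.2) k₂ q p) * Complex.I_sq
end
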